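/- Let t ≥ 2 and let f(z) = Σ_{i=0}^t a_{2i} z^{2i} be a univariate polynomial with real coefficients of degree at most 2t in which all odd-degree coefficients vanish and a_{2i} ≥ 0 for all i. If f(z) ≠ 0 for every z in the open sector Γ_{1/2} = {z ∈ ℂ∖{0} : |arg z| < π/4}, then a_0·a_{2t} ≤ max{ a_2·a_{2t−2}, a_4·a_{2t−4} }. -/

import Mathlib

/-!
Writing `f(z) = g(z²)`, the hypothesis says that `g` has no zeros in the open right half-plane, and
it suffices that `b₀ bₜ ≤ b₂ bₜ₋₂` for the coefficients `bᵢ` of `g`. The irreducible real factors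
of `g` are, up to scalars, `X + p` and `X² + c X + d` with `p, c, d ≥ 0`. If `deg g ≥ 2`, one of the
latter or a product of two of the former gives `g = q h` with `deg q = 2` and, after a change of
sign of `g`, all coefficients of `q` and `h` nonnegative. Then
`b₀ bₜ = (q₀ h₀) (q₂ hₜ₋₂) = (q₂ h₀) (q₀ hₜ₋₂) ≤ b₂ bₜ₋₂`.
-/

open Polynomial

section NonnegCoeff

variable {R : Type*} [Semiring R] [PartialOrder R] [IsOrderedRing R] {p q : R[X]}

lemma coeff_mul_nonneg (hp : ∀ i, 0 ≤ p.coeff i) (hq : ∀ i, 0 ≤ q.coeff i) (n : ℕ) :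
    0 ≤ (p * q).coeff n := by
  rw [coeff_mul]
  exact Finset.sum_nonneg fun x _ ↦ mul_nonneg (hp x.1) (hq x.2)

lemma coeff_mul_coeff_le_coeff_mul_add (hp : ∀ i, 0 ≤ p.coeff i) (hq : ∀ i, 0 ≤ q.coeff i)
    (m n : ℕ) : p.coeff m * q.coeff n ≤ (p * q).coeff (m + n) := by
  rw [coeff_mul]
  exact Finset.single_le_sum (f := fun x : ℕ × ℕ ↦ p.coeff x.1 * q.coeff x.2)
    (fun x _ ↦ mul_nonneg (hp x.1) (hq x.2)) (a := (m, n)) (by simp)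

lemma coeff_zero_mul_coeff_add_le_of_nonneg {R : Type*} [CommSemiring R] [PartialOrder R]
    [IsOrderedRing R] {p q : R[X]} (hp : ∀ i, 0 ≤ p.coeff i) (hq : ∀ i, 0 ≤ q.coeff i)
    {m n : ℕ} (hpm : p.natDegree ≤ m) (hqn : q.natDegree ≤ n) :
    (p * q).coeff 0 * (p * q).coeff (m + n) ≤ (p * q).coeff m * (p * q).coeff n := by
  have hm : p.coeff m * q.coeff 0 ≤ (p * q).coeff m := coeff_mul_coeff_le_coeff_mul_add hp hq m 0
  have hn : p.coeff 0 * q.coeff n ≤ (p * q).coeff n := by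
    simpa only [zero_add] using coeff_mul_coeff_le_coeff_mul_add hp hq 0 n
  calc (p * q).coeff 0 * (p * q).coeff (m + n)
      = (p.coeff 0 * q.coeff 0) * (p.coeff m * q.coeff n) := by
        rw [mul_coeff_zero, coeff_mul_add_eq_of_natDegree_le hpm hqn]
    _ = (p.coeff m * q.coeff 0) * (p.coeff 0 * q.coeff n) := by ring
    _ ≤ (p * q).coeff m * (p * q).coeff n :=
        mul_le_mul hm hn (mul_nonneg (hp 0) (hq n)) (coeff_mul_nonneg hp hq m)

end NonnegCoeff

lemma expand_contract_of_coeff_eq_zero {R : Type*} [CommSemiring R] {n : ℕ} (hn : n ≠ 0) {f : R[X]}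
    (hf : ∀ i, ¬ n ∣ i → f.coeff i = 0) : expand R n (contract n f) = f := by
  ext i
  rw [coeff_expand hn.bot_lt]
  split_ifs with hi
  · rw [coeff_contract hn, Nat.div_mul_cancel hi]
  · exact (hf i hi).symm

lemma arg_cpow_nat_inv (z : ℂ) {n : ℕ} (hn : n ≠ 0) : (z ^ (n⁻¹ : ℂ)).arg = z.arg / n := by
  rcases eq_or_ne z 0 with rfl | hz
  · simp [hn]
  have him : (Complex.log z * (n⁻¹ : ℂ)).im = z.arg / n := by
    rw [← div_eq_mul_inv, Complex.div_natCast_im, Complex.log_im]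
  have hn1 : (1 : ℝ) ≤ n := mod_cast Nat.one_le_iff_ne_zero.2 hn
  have hmem : z.arg / n ∈ Set.Ioc (-Real.pi) Real.pi := by
    rw [Set.mem_Ioc, lt_div_iff₀ (by positivity), div_le_iff₀ (by positivity)]
    constructor <;> nlinarith [z.neg_pi_lt_arg, z.arg_le_pi, Real.pi_pos]
  rw [Complex.cpow_def_of_ne_zero hz, ← Complex.log_im,
    Complex.log_exp (him ▸ hmem.1) (him ▸ hmem.2), him]

/-- `α`-sector-stability: `f` has no zeros in the open sector
`Γ_α = {z ∈ ℂ ∖ {0} : |arg z| < α π / 2}`. Thus `α = 1` is stability with respect to the open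
right half-plane. -/
def SectorStable {R : Type*} [CommSemiring R] [Algebra R ℂ] (α : ℝ) (f : R[X]) : Prop :=
  ∀ z : ℂ, z ≠ 0 → |z.arg| < α * (Real.pi / 2) → aeval z f ≠ 0

namespace SectorStable

variable {α : ℝ}

lemma of_dvd {R : Type*} [CommSemiring R] [Algebra R ℂ] {f g : R[X]} (hf : SectorStable α f)
    (hgf : g ∣ f) : SectorStable α g :=
  fun z hz harg hg ↦ hf z hz harg (aeval_eq_zero_of_dvd_aeval_eq_zero hgf hg)

lemma neg {R : Type*} [CommRing R] [Algebra R ℂ] {f : R[X]} (hf : SectorStable α f) :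
    SectorStable α (-f) :=
  hf.of_dvd (neg_dvd.2 dvd_rfl)

lemma of_expand {R : Type*} [CommSemiring R] [Algebra R ℂ] {n : ℕ} (hn : n ≠ 0) {g : R[X]}
    (hg : SectorStable (α / n) (expand R n g)) : SectorStable α g := by
  intro w hw harg
  have hpow : (w ^ (n⁻¹ : ℂ)) ^ n = w := Complex.cpow_nat_inv_pow w hn
  have hroot : w ^ (n⁻¹ : ℂ) ≠ 0 := by
    intro h
    rw [h, zero_pow hn] at hpow
    exact hw hpow.symm
  have hsector : |(w ^ (n⁻¹ : ℂ)).arg| < α / n * (Real.pi / 2) := by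
    rw [arg_cpow_nat_inv w hn, abs_div, Nat.abs_cast, div_mul_eq_mul_div]
    gcongr
  simpa only [expand_aeval, hpow] using hg _ hroot hsector

lemma re_nonpos_of_aeval_eq_zero {R : Type*} [CommSemiring R] [Algebra R ℂ] {g : R[X]}
    (hg : SectorStable 1 g) {z : ℂ} (hz : aeval z g = 0) : z.re ≤ 0 := by
  by_contra! hre
  have hz0 : z ≠ 0 := by
    rintro rfl
    exact lt_irrefl _ hre
  refine hg z hz0 ?_ hz
  rw [one_mul]
  exact Complex.abs_arg_lt_pi_div_two_iff.2 (.inl hre)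

variable {g : ℝ[X]}

lemma exists_monic_dvd (hg : SectorStable 1 g) (hdeg : 0 < g.natDegree) :
    ∃ q : ℝ[X], q.Monic ∧ (q.natDegree = 1 ∨ q.natDegree = 2) ∧ (∀ i, 0 ≤ q.coeff i) ∧ q ∣ g := by
  obtain ⟨z, hz⟩ :=
    IsAlgClosed.exists_aeval_eq_zero ℂ g (natDegree_pos_iff_degree_pos.1 hdeg).ne'
  have hre : z.re ≤ 0 := hg.re_nonpos_of_aeval_eq_zero hz
  by_cases him : z.im = 0
  · have hroot : g.IsRoot z.re := by
      have hreal : (z.re : ℂ) = z := Complex.conj_eq_iff_re.1 (Complex.conj_eq_iff_im.2 him)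
      rw [← hreal] at hz
      rwa [IsRoot, ← coe_aeval_eq_eval, ← aeval_algebraMap_eq_zero_iff ℂ]
    refine ⟨X - C z.re, monic_X_sub_C _, .inl (natDegree_X_sub_C _), fun i ↦ ?_,
      dvd_iff_isRoot.2 hroot⟩
    rw [coeff_sub, coeff_X, coeff_C]
    split_ifs <;> linarith
  · refine ⟨X ^ 2 - C (2 * z.re) * X + C (‖z‖ ^ 2), by monicity!, .inr (by compute_degree!),
      fun i ↦ ?_, g.quadratic_dvd_of_aeval_eq_zero_im_ne_zero hz him⟩
    rw [coeff_add, coeff_sub, coeff_X_pow, coeff_C_mul, coeff_X, coeff_C]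
    split_ifs <;> nlinarith [sq_nonneg ‖z‖]

lemma exists_monic_natDegree_eq_two_dvd (hg : SectorStable 1 g) (hdeg : 2 ≤ g.natDegree) :
    ∃ q : ℝ[X], q.Monic ∧ q.natDegree = 2 ∧ (∀ i, 0 ≤ q.coeff i) ∧ q ∣ g := by
  obtain ⟨p, hp, hp1 | hp2, hpcoeff, h, rfl⟩ := hg.exists_monic_dvd (by lia)
  · have hh : h ≠ 0 := right_ne_zero_of_mul (ne_zero_of_natDegree_gt hdeg)
    rw [hp.natDegree_mul' hh] at hdeg
    obtain ⟨q, hq, hq1 | hq2, hqcoeff, hqh⟩ :=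
      (hg.of_dvd (dvd_mul_left h p)).exists_monic_dvd (by lia)
    · exact ⟨p * q, hp.mul hq, by rw [hp.natDegree_mul hq, hp1, hq1],
        coeff_mul_nonneg hpcoeff hqcoeff, mul_dvd_mul_left p hqh⟩
    · exact ⟨q, hq, hq2, hqcoeff, hqh.mul_left p⟩
  · exact ⟨p, hp, hp2, hpcoeff, dvd_mul_right p h⟩

lemma coeff_nonneg (hg : SectorStable 1 g) (hlead : 0 ≤ g.leadingCoeff) (i : ℕ) :
    0 ≤ g.coeff i := by
  induction hn : g.natDegree using Nat.strong_induction_on generalizing g i with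
  | _ n ih =>
  rcases Nat.eq_zero_or_pos g.natDegree with hdeg | hdeg
  · rw [leadingCoeff, hdeg] at hlead
    rw [eq_C_of_natDegree_eq_zero hdeg, coeff_C]
    split_ifs
    exacts [hlead, le_rfl]
  obtain ⟨q, hq, hqdeg, hqcoeff, h, rfl⟩ := hg.exists_monic_dvd hdeg
  have hh : h ≠ 0 := right_ne_zero_of_mul (ne_zero_of_natDegree_gt hdeg)
  rw [hq.natDegree_mul' hh] at hn
  rw [leadingCoeff_mul, hq, one_mul] at hlead
  exact coeff_mul_nonneg hqcoeff
    (fun j ↦ ih h.natDegree (by lia) (hg.of_dvd (dvd_mul_left h q)) hlead j rfl) i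

theorem coeff_zero_mul_coeff_add_two_le (hg : SectorStable 1 g) {n : ℕ}
    (hdeg : g.natDegree ≤ n + 2) : g.coeff 0 * g.coeff (n + 2) ≤ g.coeff 2 * g.coeff n := by
  wlog hlead : 0 ≤ g.leadingCoeff generalizing g
  · simpa only [coeff_neg, neg_mul_neg] using
      this hg.neg (by rwa [natDegree_neg]) (by rw [leadingCoeff_neg]; linarith)
  rcases lt_or_ge g.natDegree 2 with hlt | hge
  · have hcoeff (k : ℕ) (hk : 2 ≤ k) : g.coeff k = 0 :=
      coeff_eq_zero_of_natDegree_lt (hlt.trans_le hk)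
    rw [hcoeff 2 le_rfl, hcoeff (n + 2) (by lia), mul_zero, zero_mul]
  obtain ⟨q, hq, hqdeg, hqcoeff, h, rfl⟩ := hg.exists_monic_natDegree_eq_two_dvd hge
  have hh : h ≠ 0 := right_ne_zero_of_mul (ne_zero_of_natDegree_gt hge)
  rw [leadingCoeff_mul, hq, one_mul] at hlead
  rw [hq.natDegree_mul' hh] at hdeg
  rw [add_comm n 2]
  exact coeff_zero_mul_coeff_add_le_of_nonneg hqcoeff
    ((hg.of_dvd (dvd_mul_left h q)).coeff_nonneg hlead) hqdeg.le (by lia)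

end SectorStable

theorem half_sector_stable_coeff_inequality_general (t : ℕ) (ht : 2 ≤ t) (f : ℝ[X])
    (hdeg : f.natDegree ≤ 2 * t) (hodd : ∀ i, f.coeff (2 * i + 1) = 0)
    (hstable : SectorStable (1 / 2) f) :
    f.coeff 0 * f.coeff (2 * t) ≤ f.coeff 4 * f.coeff (2 * t - 4) := by
  obtain ⟨n, rfl⟩ := Nat.exists_eq_add_of_le' ht
  obtain ⟨g, rfl⟩ : ∃ g : ℝ[X], expand ℝ 2 g = f := by
    refine ⟨contract 2 f, expand_contract_of_coeff_eq_zero two_ne_zero fun i hi ↦ ?_⟩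
    obtain ⟨k, rfl⟩ : Odd i := Nat.not_even_iff_odd.1 (mt Even.two_dvd hi)
    exact hodd k
  have hg : SectorStable 1 g := .of_expand two_ne_zero (by exact_mod_cast hstable)
  have hgdeg : g.natDegree ≤ n + 2 := by
    rw [natDegree_expand] at hdeg
    lia
  have hcoeff (i : ℕ) : (expand ℝ 2 g).coeff (2 * i) = g.coeff i := coeff_expand_mul' two_pos g i
  rw [show 2 * (n + 2) - 4 = 2 * n by lia, show 4 = 2 * 2 from rfl, show 0 = 2 * 0 from rfl]
  simpa only [hcoeff] using hg.coeff_zero_mul_coeff_add_two_le hgdeg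

/-- For a `1/2`-sector-stable univariate real polynomial `f = Σ_{i=0}^t a_{2i} z^{2i}` of degree
at most `2t` (`t ≥ 2`) with nonnegative coefficients and vanishing odd-degree coefficients
(nonvanishing on the open sector `Γ_{1/2} = {z ≠ 0 : |arg z| < π/4}`), one has
`a_0·a_{2t} ≤ max (a_2·a_{2t-2}) (a_4·a_{2t-4})`. -/
theorem half_sector_stable_coeff_inequality
    (t : ℕ) (ht : 2 ≤ t) (f : Polynomial ℝ)
    (hdeg : f.natDegree ≤ 2 * t)
    (hodd : ∀ i, f.coeff (2 * i + 1) = 0)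
    (hcoeff : ∀ i, 0 ≤ f.coeff i)
    (hstable : ∀ z : ℂ, z ≠ 0 → |z.arg| < Real.pi / 4 → Polynomial.aeval z f ≠ 0) :
    f.coeff 0 * f.coeff (2 * t) ≤
      max (f.coeff 2 * f.coeff (2 * t - 2)) (f.coeff 4 * f.coeff (2 * t - 4)) :=
  le_max_of_le_right <| half_sector_stable_coeff_inequality_general t ht f hdeg hodd
    fun z hz harg ↦ hstable z hz (by linarith)
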